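/- Let K be a stabilizing derivative-feedback gain, P a symmetric positive definite solution of the policy-evaluation equation for K, and K⁺ = −R⁻¹ Bᵀ A⁻ᵀ P, and suppose I + B·K⁺ is invertible. If x : ℝ → ℝⁿ is differentiable with x'(t) = (I + B·K⁺)⁻¹·A · x(t) for all t (the closed-loop trajectory under the improved gain), then the Lyapunov function t ↦ x(t)ᵀ P x(t) is monotone nonincreasing in t. -/

import Mathlib

open Matrix MeasureTheory Filter Topology

/-- A real square matrix is Hurwitz if every complex eigenvalue has strictly
negative real part. -/
def IsHurwitz {n : ℕ} (M : Matrix (Fin n) (Fin n) ℝ) : Prop :=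
  ∀ μ ∈ spectrum ℂ (M.map (Complex.ofReal)), μ.re < 0

/-- A derivative-feedback gain `K` is stabilizing if `I + B * K` is invertible
and `(I + B * K)⁻¹ * A` is Hurwitz. -/
def IsStabilizing {n m : ℕ} (A : Matrix (Fin n) (Fin n) ℝ) (B : Matrix (Fin n) (Fin m) ℝ)
    (K : Matrix (Fin m) (Fin n) ℝ) : Prop :=
  IsUnit (1 + B * K) ∧ IsHurwitz ((1 + B * K)⁻¹ * A)

/-- The policy-evaluation (Lyapunov) equation for the gain `K`:
`P (A⁻¹(I + BK)) + (A⁻¹(I + BK))ᵀ P + Q + Kᵀ R K = 0`. -/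
def PolicyEval {n m : ℕ} (A : Matrix (Fin n) (Fin n) ℝ) (B : Matrix (Fin n) (Fin m) ℝ)
    (Q : Matrix (Fin n) (Fin n) ℝ) (R : Matrix (Fin m) (Fin m) ℝ)
    (K : Matrix (Fin m) (Fin n) ℝ) (P : Matrix (Fin n) (Fin n) ℝ) : Prop :=
  P * (A⁻¹ * (1 + B * K)) + (A⁻¹ * (1 + B * K))ᵀ * P + Q + Kᵀ * R * K = 0

/-- The policy-improvement update: `K⁺ = −R⁻¹ Bᵀ A⁻ᵀ P`. -/
noncomputable def ImprovedGain {n m : ℕ} (A : Matrix (Fin n) (Fin n) ℝ) (B : Matrix (Fin n) (Fin m) ℝ)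
    (R : Matrix (Fin m) (Fin m) ℝ) (P : Matrix (Fin n) (Fin n) ℝ) :
    Matrix (Fin m) (Fin n) ℝ :=
  -(R⁻¹ * Bᵀ * (A⁻¹)ᵀ * P)

/-- The derivative-feedback algebraic Riccati equation:
`P A⁻¹ + A⁻ᵀ P − P A⁻¹ B R⁻¹ Bᵀ A⁻ᵀ P + Q = 0`. -/
def SolvesARE {n m : ℕ} (A : Matrix (Fin n) (Fin n) ℝ) (B : Matrix (Fin n) (Fin m) ℝ)
    (Q : Matrix (Fin n) (Fin n) ℝ) (R : Matrix (Fin m) (Fin m) ℝ)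
    (P : Matrix (Fin n) (Fin n) ℝ) : Prop :=
  P * A⁻¹ + (A⁻¹)ᵀ * P - P * A⁻¹ * B * R⁻¹ * Bᵀ * (A⁻¹)ᵀ * P + Q = 0

/-! The derivative-feedback loop `x' = (I + B K)⁻¹ A x` is best read backwards, as
`x = A⁻¹ (I + B K) x'`: the derivative of `xᵀ P x` is then a quadratic form in the velocity `x'`,
and policy evaluation says that this form is `-(Q + Kᵀ R K)`. Completing the square around the
improved gain `K⁺` shows that `P` solves the policy-evaluation equation of `K⁺` as well, provided
that the state cost `Q` is replaced by `Q + (K - K⁺)ᵀ R (K - K⁺)`, which is still positive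
semidefinite. -/

section LyapunovFunction

variable {ι κ : Type*} [Fintype ι] [Fintype κ]

theorem inv_mul_mulVec_inv_mul_mulVec {α : Type*} [CommRing α] [DecidableEq ι]
    {A S : Matrix ι ι α} (hA : IsUnit A) (hS : IsUnit S) (v : ι → α) :
    (A⁻¹ * S) *ᵥ ((S⁻¹ * A) *ᵥ v) = v := by
  rw [isUnit_iff_isUnit_det] at hA hS
  rw [mulVec_mulVec, Matrix.mul_assoc, mul_nonsing_inv_cancel_left _ _ hS, nonsing_inv_mul _ hA,
    one_mulVec]

theorem hasDerivWithinAt_dotProduct_mulVec {𝕜 : Type*} [NontriviallyNormedField 𝕜] [CompleteSpace 𝕜]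
    (P : Matrix ι κ 𝕜) {u : 𝕜 → ι → 𝕜} {v : 𝕜 → κ → 𝕜} {u' : ι → 𝕜} {v' : κ → 𝕜} {D : Set 𝕜}
    {t : 𝕜} (hu : HasDerivWithinAt u u' D t) (hv : HasDerivWithinAt v v' D t) :
    HasDerivWithinAt (fun s => u s ⬝ᵥ P *ᵥ v s) (u t ⬝ᵥ P *ᵥ v' + u' ⬝ᵥ P *ᵥ v t) D t := by
  classical
  simpa only [LinearMap.toContinuousBilinearMap_apply, Matrix.toLinearMap₂'_apply'] using
    (Matrix.toLinearMap₂' 𝕜 P).toContinuousBilinearMap.hasDerivWithinAt_of_bilinear hu hv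

theorem mulVec_dotProduct_mulVec_add {α : Type*} [CommSemiring α] (P M : Matrix ι ι α)
    (y : ι → α) :
    (M *ᵥ y) ⬝ᵥ P *ᵥ y + y ⬝ᵥ P *ᵥ (M *ᵥ y) = y ⬝ᵥ (P * M + Mᵀ * P) *ᵥ y := by
  rw [add_mulVec, dotProduct_add, ← mulVec_mulVec y P M, ← mulVec_mulVec y Mᵀ P,
    dotProduct_mulVec y Mᵀ, vecMul_transpose, add_comm]

theorem antitoneOn_dotProduct_mulVec_of_eq_mulVec_deriv {P M : Matrix ι ι ℝ} {D : Set ℝ}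
    (hD : Convex ℝ D) {x x' : ℝ → ι → ℝ} (hx : ∀ t ∈ D, HasDerivWithinAt x (x' t) D t)
    (hM : ∀ t ∈ D, x t = M *ᵥ x' t) (hPM : (-(P * M + Mᵀ * P)).PosSemidef) :
    AntitoneOn (fun t => x t ⬝ᵥ P *ᵥ x t) D := by
  have hderiv (t : ℝ) (ht : t ∈ D) := hasDerivWithinAt_dotProduct_mulVec P (hx t ht) (hx t ht)
  refine antitoneOn_of_hasDerivWithinAt_nonpos hD
    (fun t ht => (hderiv t ht).continuousWithinAt)
    (fun t ht => (hderiv t (interior_subset ht)).mono interior_subset) fun t ht => ?_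
  have hnonneg := hPM.dotProduct_mulVec_nonneg (x' t)
  rw [star_trivial, neg_mulVec, dotProduct_neg, ← mulVec_dotProduct_mulVec_add,
    ← hM t (interior_subset ht)] at hnonneg
  exact neg_nonneg.mp hnonneg

end LyapunovFunction

section PolicyIteration

variable {n m : ℕ} {A : Matrix (Fin n) (Fin n) ℝ} {B : Matrix (Fin n) (Fin m) ℝ}
  {Q : Matrix (Fin n) (Fin n) ℝ} {R : Matrix (Fin m) (Fin m) ℝ}
  {K : Matrix (Fin m) (Fin n) ℝ} {P : Matrix (Fin n) (Fin n) ℝ}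

theorem PolicyEval.posSemidef_neg_lyapunov (hPE : PolicyEval A B Q R K P) (hQ : Q.PosSemidef)
    (hR : R.PosSemidef) :
    (-(P * (A⁻¹ * (1 + B * K)) + (A⁻¹ * (1 + B * K))ᵀ * P)).PosSemidef := by
  rw [PolicyEval, add_assoc] at hPE
  rw [neg_eq_of_add_eq_zero_right hPE]
  exact hQ.add (hR.conjTranspose_mul_mul_same K)

theorem PolicyEval.antitoneOn_dotProduct_mulVec (hPE : PolicyEval A B Q R K P) (hA : IsUnit A)
    (hK : IsUnit (1 + B * K)) (hQ : Q.PosSemidef) (hR : R.PosSemidef) {D : Set ℝ}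
    (hD : Convex ℝ D) {x : ℝ → Fin n → ℝ}
    (hx : ∀ t ∈ D, HasDerivWithinAt x (((1 + B * K)⁻¹ * A) *ᵥ x t) D t) :
    AntitoneOn (fun t => x t ⬝ᵥ P *ᵥ x t) D :=
  antitoneOn_dotProduct_mulVec_of_eq_mulVec_deriv hD hx
    (fun t _ => (inv_mul_mulVec_inv_mul_mulVec hA hK (x t)).symm)
    (hPE.posSemidef_neg_lyapunov hQ hR)

theorem mul_improvedGain (hR : IsUnit R) :
    R * ImprovedGain A B R P = -(Bᵀ * (A⁻¹)ᵀ * P) := by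
  rw [isUnit_iff_isUnit_det] at hR
  simp only [ImprovedGain, Matrix.mul_neg, Matrix.mul_assoc, mul_nonsing_inv_cancel_left _ _ hR]

theorem improvedGain_transpose_mul (hR : IsUnit R) (hRsymm : R.IsSymm) (hP : P.IsSymm) :
    (ImprovedGain A B R P)ᵀ * R = -(P * A⁻¹ * B) := by
  have htranspose := congrArg transpose (mul_improvedGain (A := A) (B := B) (P := P) hR)
  simpa only [transpose_mul, transpose_neg, transpose_transpose, hRsymm.eq, hP.eq,
    Matrix.mul_assoc] using htranspose

theorem PolicyEval.improvedGain (hPE : PolicyEval A B Q R K P) (hR : IsUnit R)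
    (hRsymm : R.IsSymm) (hP : P.IsSymm) :
    PolicyEval A B
      (Q + (K - ImprovedGain A B R P)ᵀ * R * (K - ImprovedGain A B R P)) R
      (ImprovedGain A B R P) P := by
  have hRL := mul_improvedGain (A := A) (B := B) (P := P) hR
  have hLR := improvedGain_transpose_mul (A := A) (B := B) hR hRsymm hP
  set L := ImprovedGain A B R P
  have lyapunov_eq (G : Matrix (Fin m) (Fin n) ℝ) :
      P * (A⁻¹ * (1 + B * G)) + (A⁻¹ * (1 + B * G))ᵀ * P
        = P * A⁻¹ + (A⁻¹)ᵀ * P - Lᵀ * R * G - Gᵀ * (R * L) := by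
    rw [hLR, hRL]
    simp only [Matrix.mul_add, Matrix.add_mul, Matrix.mul_one, Matrix.mul_neg, Matrix.neg_mul,
      transpose_add, transpose_mul, Matrix.mul_assoc]
    abel
  rw [PolicyEval, lyapunov_eq] at hPE ⊢
  rw [← hPE]
  simp only [transpose_sub, Matrix.mul_sub, Matrix.sub_mul, Matrix.mul_assoc]
  abel

end PolicyIteration

theorem lyapunov_nonincreasing_along_improved_loop_general {n m : ℕ}
    {A : Matrix (Fin n) (Fin n) ℝ} {B : Matrix (Fin n) (Fin m) ℝ}
    {Q : Matrix (Fin n) (Fin n) ℝ} {R : Matrix (Fin m) (Fin m) ℝ}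
    (hA : IsUnit A) (hQ : Q.PosSemidef) (hR : R.PosDef)
    {K : Matrix (Fin m) (Fin n) ℝ} {P : Matrix (Fin n) (Fin n) ℝ}
    (hP : P.IsSymm) (hPE : PolicyEval A B Q R K P)
    (hinv : IsUnit (1 + B * ImprovedGain A B R P)) {D : Set ℝ} (hD : Convex ℝ D)
    {x : ℝ → Fin n → ℝ}
    (hx : ∀ t ∈ D,
      HasDerivWithinAt x (((1 + B * ImprovedGain A B R P)⁻¹ * A) *ᵥ x t) D t) :
    AntitoneOn (fun t => x t ⬝ᵥ P *ᵥ x t) D := by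
  have hPE' := hPE.improvedGain hR.isUnit (isHermitian_iff_isSymm.mp hR.isHermitian) hP
  have hQ' : (Q + (K - ImprovedGain A B R P)ᵀ * R * (K - ImprovedGain A B R P)).PosSemidef :=
    hQ.add (hR.posSemidef.conjTranspose_mul_mul_same _)
  exact hPE'.antitoneOn_dotProduct_mulVec hA hinv hQ' hR.posSemidef hD hx

/-- Lyapunov decrease along the improved closed loop: if `P > 0` solves the
policy-evaluation equation for a stabilizing gain `K`, `K⁺ = −R⁻¹ Bᵀ A⁻ᵀ P`,
`I + B K⁺` is invertible, and `x` solves `x' = (I + B K⁺)⁻¹ A x`, then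
`t ↦ x(t)ᵀ P x(t)` is monotone nonincreasing. -/
theorem lyapunov_nonincreasing_along_improved_loop {n m : ℕ} (hn : 0 < n) (hm : 0 < m)
    (A : Matrix (Fin n) (Fin n) ℝ) (B : Matrix (Fin n) (Fin m) ℝ)
    (Q : Matrix (Fin n) (Fin n) ℝ) (R : Matrix (Fin m) (Fin m) ℝ)
    (hA : IsUnit A) (hQ : Q.PosSemidef) (hR : R.PosDef)
    (K : Matrix (Fin m) (Fin n) ℝ) (P : Matrix (Fin n) (Fin n) ℝ)
    (hK : IsStabilizing A B K) (hP : P.PosDef)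
    (hPE : PolicyEval A B Q R K P)
    (hinv : IsUnit (1 + B * ImprovedGain A B R P))
    (x : ℝ → Fin n → ℝ)
    (hx : ∀ t : ℝ,
      HasDerivAt x (((1 + B * ImprovedGain A B R P)⁻¹ * A).mulVec (x t)) t) :
    Antitone (fun t : ℝ => x t ⬝ᵥ P.mulVec (x t)) :=
  antitoneOn_univ.mp <| lyapunov_nonincreasing_along_improved_loop_general hA hQ hR
    (isHermitian_iff_isSymm.mp hP.isHermitian) hPE hinv convex_univ
    fun t _ => (hx t).hasDerivWithinAt
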